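/- Let A be a unital C*-algebra, E(A) = {a ∈ A : 0 ≤ a ≤ 1}, and let τ : E(A) → E(A) satisfy τ(1) = 1, τ(a+b) = τ(a)+τ(b) whenever a, b and a+b all lie in E(A), and the Jordan condition τ(a²) = τ((τ(a))²) for every a ∈ E(A). Then: (i) τ is idempotent (τ(τ(a)) = τ(a) for all a ∈ E(A)), so τ is a state operator; (ii) for every a ∈ E(A), τ(a) = 0 if and only if τ(a²) = 0; (iii) if a ∈ E(A) satisfies τ(a) = 0, then τ(b·a·b) = 0 for every b ∈ E(A). -/

import Mathlib

/-!
Every additive map on the effects of a unital C*-algebra is the restriction of an additive map `T`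
on the self-adjoint elements, because these are differences of natural multiples of effects. The
Jordan condition, homogeneous of degree two, then passes from effects to self-adjoint elements, and
polarizing it gives `T (x * y + y * x) = T (T x * T y + T y * T x)`. Taking `y = 1` yields
idempotence; if `T x = 0`, the identity
`2 • (y * x * y) = y * (x * y + y * x) + (x * y + y * x) * y - (x * y ^ 2 + y ^ 2 * x)`
yields `T (y * x * y) = 0`. That `T (x ^ 2) = 0` forces `T x = 0` comes from applying the positive
map `T` to `(n • x - 1) ^ 2` for every natural number `n`.
-/

open Set

section OrderUnit

variable {𝕜 V W : Type*} [AddCommGroup V] [PartialOrder V] [AddCommGroup W]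

/-- `u` is a nonnegative order unit of an ordered abelian group: every element lies below a
multiple of it. -/
def IsOrderUnit (u : V) : Prop := 0 ≤ u ∧ ∀ x, ∃ n : ℕ, x ≤ n • u

/-- Additivity of `τ` on the interval effect algebra `[0, u]` of an ordered abelian group, whose
partial addition is the addition of the group where the sum stays below `u`. -/
def IsEffectAdditive (u : V) (τ : V → W) : Prop :=
  ∀ a ∈ Icc 0 u, ∀ b ∈ Icc 0 u, a + b ∈ Icc 0 u → τ (a + b) = τ a + τ b

variable {u : V} {τ : V → W}

theorem IsEffectAdditive.map_zero (hτ : IsEffectAdditive u τ) (hu : 0 ≤ u) : τ 0 = 0 := by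
  have h0 : (0 : V) ∈ Icc 0 u := ⟨le_rfl, hu⟩
  simpa using hτ 0 h0 0 h0 (by simpa using hu)

theorem inv_natCast_smul_mem_Icc [Field 𝕜] [LinearOrder 𝕜] [IsStrictOrderedRing 𝕜] [Module 𝕜 V]
    [PosSMulMono 𝕜 V] {x : V} (hx : 0 ≤ x) {n : ℕ} (hn : n ≠ 0) (hxn : x ≤ n • u) :
    (n : 𝕜)⁻¹ • x ∈ Icc 0 u := by
  refine ⟨smul_nonneg (by positivity) hx, ?_⟩
  rwa [inv_smul_le_iff_of_pos (by positivity), Nat.cast_smul_eq_nsmul]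

variable [IsOrderedAddMonoid V]

theorem IsOrderUnit.exists_ne_zero_le_nsmul (hu : IsOrderUnit u) (x : V) :
    ∃ n : ℕ, n ≠ 0 ∧ x ≤ n • u :=
  (hu.2 x).imp' Nat.succ fun n hn =>
    ⟨n.succ_ne_zero, hn.trans (nsmul_le_nsmul_left hu.1 n.le_succ)⟩

theorem IsOrderUnit.exists_nonneg_sub_nonneg (hu : IsOrderUnit u) (x : V) :
    ∃ y z, 0 ≤ y ∧ 0 ≤ z ∧ x = y - z := by
  obtain ⟨n, hn⟩ := hu.2 (-x)
  exact ⟨x + n • u, n • u, neg_le_iff_add_nonneg'.mp hn, nsmul_nonneg hu.1 n,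
    (add_sub_cancel_right x _).symm⟩

theorem exists_addMonoidHom_of_map_add_of_nonneg
    (hV : ∀ x : V, ∃ y z, 0 ≤ y ∧ 0 ≤ z ∧ x = y - z) {p : V → W}
    (hp : ∀ x y, 0 ≤ x → 0 ≤ y → p (x + y) = p x + p y) :
    ∃ T : V →+ W, ∀ x, 0 ≤ x → T x = p x := by
  choose pos neg hpos hneg hsub using hV
  have hwd {y z y' z' : V} (hy : 0 ≤ y) (hz : 0 ≤ z) (hy' : 0 ≤ y') (hz' : 0 ≤ z')
      (h : y - z = y' - z') : p y - p z = p y' - p z' := by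
    rw [sub_eq_sub_iff_add_eq_add] at h ⊢
    rw [← hp y z' hy hz', h, hp y' z hy' hz]
  refine ⟨.mk' (fun x => p (pos x) - p (neg x)) fun x y => ?_, fun x hx => ?_⟩
  · have hadd : pos (x + y) - neg (x + y) = (pos x + pos y) - (neg x + neg y) := by
      rw [← hsub, add_sub_add_comm, ← hsub, ← hsub]
    rw [hwd (hpos _) (hneg _) (add_nonneg (hpos x) (hpos y)) (add_nonneg (hneg x) (hneg y)) hadd,
      hp _ _ (hpos x) (hpos y), hp _ _ (hneg x) (hneg y), add_sub_add_comm]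
  · have hp0 : p 0 = 0 := by simpa using hp 0 0 le_rfl le_rfl
    calc p (pos x) - p (neg x) = p x - p 0 :=
          hwd (hpos x) (hneg x) hx le_rfl (by rw [← hsub, sub_zero])
      _ = p x := by rw [hp0, sub_zero]

theorem IsEffectAdditive.map_nsmul (hτ : IsEffectAdditive u τ) {a : V} (ha : 0 ≤ a) {n : ℕ}
    (hn : n • a ≤ u) : τ (n • a) = n • τ a := by
  induction n with
  | zero => simpa using hτ.map_zero (by simpa using hn)
  | succ n ih =>
    have hna : n • a ≤ u := (nsmul_le_nsmul_left ha n.le_succ).trans hn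
    rw [succ_nsmul] at hn
    have hau : a ≤ u := (le_add_of_nonneg_left (nsmul_nonneg ha n)).trans hn
    rw [succ_nsmul, succ_nsmul, ← ih hna]
    exact hτ _ ⟨nsmul_nonneg ha n, hna⟩ _ ⟨ha, hau⟩
      ⟨add_nonneg (nsmul_nonneg ha n) ha, hn⟩

variable (𝕜) [Field 𝕜] [LinearOrder 𝕜] [IsStrictOrderedRing 𝕜] [Module 𝕜 V] [PosSMulMono 𝕜 V]

include 𝕜 in
theorem IsOrderUnit.exists_mem_Icc_nsmul_eq (hu : IsOrderUnit u) {x : V} (hx : 0 ≤ x) :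
    ∃ n : ℕ, ∃ a ∈ Icc 0 u, n • a = x := by
  obtain ⟨n, hn, hxn⟩ := hu.exists_ne_zero_le_nsmul x
  refine ⟨n, (n : 𝕜)⁻¹ • x, inv_natCast_smul_mem_Icc hx hn hxn, ?_⟩
  rw [← Nat.cast_smul_eq_nsmul 𝕜, smul_inv_smul₀ (Nat.cast_ne_zero.mpr hn)]

namespace IsEffectAdditive

theorem nsmul_map_inv_natCast_smul (hτ : IsEffectAdditive u τ) {x : V} (hx : 0 ≤ x) {n m : ℕ}
    (hn : n ≠ 0) (hm : m ≠ 0) (hxn : x ≤ n • u) :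
    n • τ ((n : 𝕜)⁻¹ • x) = (n * m) • τ (((n * m : ℕ) : 𝕜)⁻¹ • x) := by
  have hsmul : (n : 𝕜)⁻¹ • x = m • ((n * m : ℕ) : 𝕜)⁻¹ • x := by
    rw [← Nat.cast_smul_eq_nsmul 𝕜, smul_smul]
    congr 1
    push_cast
    field_simp
  have hle : m • ((n * m : ℕ) : 𝕜)⁻¹ • x ≤ u :=
    hsmul ▸ (inv_natCast_smul_mem_Icc hx hn hxn).2
  rw [hsmul, hτ.map_nsmul (smul_nonneg (by positivity) hx) hle, smul_smul]

theorem exists_eq_nsmul_map_inv_natCast_smul (hτ : IsEffectAdditive u τ) (hu : IsOrderUnit u) :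
    ∃ p : V → W, ∀ x, 0 ≤ x → ∀ n : ℕ, n ≠ 0 → x ≤ n • u → p x = n • τ ((n : 𝕜)⁻¹ • x) := by
  choose k hk hxk using hu.exists_ne_zero_le_nsmul
  refine ⟨fun x => k x • τ ((k x : 𝕜)⁻¹ • x), fun x hx n hn hxn => ?_⟩
  calc k x • τ ((k x : 𝕜)⁻¹ • x) = (k x * n) • τ (((k x * n : ℕ) : 𝕜)⁻¹ • x) :=
        hτ.nsmul_map_inv_natCast_smul 𝕜 hx (hk x) hn (hxk x)
    _ = (n * k x) • τ (((n * k x : ℕ) : 𝕜)⁻¹ • x) := by rw [mul_comm]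
    _ = n • τ ((n : 𝕜)⁻¹ • x) := (hτ.nsmul_map_inv_natCast_smul 𝕜 hx hn (hk x) hxn).symm

include 𝕜 in
theorem exists_addMonoidHom_eqOn_Icc (hτ : IsEffectAdditive u τ) (hu : IsOrderUnit u) :
    ∃ T : V →+ W, EqOn T τ (Icc 0 u) := by
  obtain ⟨p, hp⟩ := hτ.exists_eq_nsmul_map_inv_natCast_smul 𝕜 hu
  have hadd (x y : V) (hx : 0 ≤ x) (hy : 0 ≤ y) : p (x + y) = p x + p y := by
    obtain ⟨n, hn, hxyn⟩ := hu.exists_ne_zero_le_nsmul (x + y)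
    have hxn : x ≤ n • u := (le_add_of_nonneg_right hy).trans hxyn
    have hyn : y ≤ n • u := (le_add_of_nonneg_left hx).trans hxyn
    have hxy := inv_natCast_smul_mem_Icc (𝕜 := 𝕜) (add_nonneg hx hy) hn hxyn
    rw [hp _ (add_nonneg hx hy) n hn hxyn, hp x hx n hn hxn, hp y hy n hn hyn]
    rw [smul_add] at hxy ⊢
    rw [hτ _ (inv_natCast_smul_mem_Icc hx hn hxn) _ (inv_natCast_smul_mem_Icc hy hn hyn) hxy,
      smul_add]
  obtain ⟨T, hT⟩ :=
    exists_addMonoidHom_of_map_add_of_nonneg hu.exists_nonneg_sub_nonneg hadd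
  refine ⟨T, fun a ha => ?_⟩
  rw [hT a ha.1, hp a ha.1 1 one_ne_zero (by simpa only [one_smul] using ha.2), Nat.cast_one,
    inv_one, one_smul, one_smul]

end IsEffectAdditive

end OrderUnit

section Jordan

variable {A : Type*} [Ring A] [StarRing A] {T : A →+ A}

/-- The Jordan condition `T (x ^ 2) = T ((T x) ^ 2)`, imposed on all self-adjoint elements rather
than on effects only, for an additive map `T`. -/
def IsSelfAdjointJordan (T : A →+ A) : Prop :=
  ∀ x, IsSelfAdjoint x → T (x ^ 2) = T (T x ^ 2)

namespace IsSelfAdjointJordan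

theorem of_nonneg [PartialOrder A] [StarOrderedRing A] [SelfAdjointDecompose A]
    (hT : ∀ x, 0 ≤ x → T (x ^ 2) = T (T x ^ 2)) : IsSelfAdjointJordan T := by
  have parallelogram (y z : A) :
      T ((y - z) ^ 2) = 2 • T (y ^ 2) + 2 • T (z ^ 2) - T ((y + z) ^ 2) := by
    rw [← map_nsmul, ← map_nsmul, ← map_add, ← map_sub]
    congr 1
    noncomm_ring
  intro x hx
  obtain ⟨y, z, hy, hz, rfl⟩ := hx.exists_nonneg_sub_nonneg
  rw [parallelogram, hT y hy, hT z hz, hT (y + z) (add_nonneg hy hz), map_add, map_sub,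
    parallelogram]

theorem map_mul_add_mul (hT : IsSelfAdjointJordan T) {x y : A} (hx : IsSelfAdjoint x)
    (hy : IsSelfAdjoint y) : T (x * y + y * x) = T (T x * T y + T y * T x) := by
  have polarization (a b : A) :
      T (a * b + b * a) = T ((a + b) ^ 2) - T (a ^ 2) - T (b ^ 2) := by
    rw [← map_sub, ← map_sub]
    congr 1
    noncomm_ring
  rw [polarization, hT _ (hx.add hy), hT x hx, hT y hy, map_add, polarization]

variable [IsAddTorsionFree A]

theorem map_map (hT : IsSelfAdjointJordan T) (hT1 : T 1 = 1) {x : A} (hx : IsSelfAdjoint x) :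
    T (T x) = T x := by
  have h := hT.map_mul_add_mul hx (.one A)
  rw [hT1, mul_one, one_mul, mul_one, one_mul, map_add, map_add, ← two_nsmul, ← two_nsmul] at h
  exact (nsmul_right_injective two_ne_zero h).symm

theorem map_mul_mul_eq_zero (hT : IsSelfAdjointJordan T) {x y : A} (hx : IsSelfAdjoint x)
    (hy : IsSelfAdjoint y) (hTx : T x = 0) : T (y * x * y) = 0 := by
  have hjordan {z w : A} (hz : IsSelfAdjoint z) (hw : IsSelfAdjoint w) (hTz : T z = 0) :
      T (z * w + w * z) = 0 := by
    rw [hT.map_mul_add_mul hz hw, hTz, zero_mul, mul_zero, add_zero, map_zero]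
  have hxy : IsSelfAdjoint (x * y + y * x) := by
    simp only [isSelfAdjoint_iff, star_add, star_mul, hx.star_eq, hy.star_eq, add_comm]
  have hid : 2 • (y * x * y) =
      ((x * y + y * x) * y + y * (x * y + y * x)) - (x * y ^ 2 + y ^ 2 * x) := by
    noncomm_ring
  refine (nsmul_eq_zero_iff_right two_ne_zero).mp ?_
  rw [← map_nsmul, hid, map_sub, hjordan hxy hy (hjordan hx hy hTx), hjordan hx (hy.pow 2) hTx,
    sub_zero]

end IsSelfAdjointJordan

end Jordan

section Positive

variable {B : Type*} [AddCommGroup B] [PartialOrder B] [Module ℝ B] [PosSMulMono ℝ B]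
  [TopologicalSpace B] [ContinuousSMul ℝ B] [ClosedIciTopology B]

theorem nonpos_of_forall_nsmul_le {x y : B} (h : ∀ n : ℕ, n • x ≤ y) : x ≤ 0 := by
  have hlim : Filter.Tendsto (fun n : ℕ => ((n : ℝ) + 1)⁻¹ • y) Filter.atTop (nhds 0) := by
    simpa only [one_div, zero_smul] using
      (tendsto_one_div_add_atTop_nhds_zero_nat (𝕜 := ℝ)).smul_const y
  refine ge_of_tendsto' hlim fun n => ?_
  rw [le_inv_smul_iff_of_pos (by positivity), ← Nat.cast_succ, Nat.cast_smul_eq_nsmul]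
  exact h (n + 1)

theorem map_eq_zero_of_map_sq_eq_zero [IsOrderedAddMonoid B] {A : Type*} [Ring A] [StarRing A]
    [PartialOrder A] [StarOrderedRing A] {T : A →+ B} (hT : ∀ x, 0 ≤ x → 0 ≤ T x) {x : A}
    (hx : IsSelfAdjoint x) (h : T (x ^ 2) = 0) : T x = 0 := by
  have hnonpos {y : A} (hy : IsSelfAdjoint y) (hTy : T (y ^ 2) = 0) : T y ≤ 0 := by
    have htwo : (2 : ℝ) • T y ≤ (2 : ℝ) • 0 := by
      rw [smul_zero]
      refine nonpos_of_forall_nsmul_le (y := T 1) fun n => ?_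
      have hn : IsSelfAdjoint (n • y - 1) :=
        IsSelfAdjoint.sub (nsmul_mem (S := selfAdjoint A) hy n) (.one A)
      have hexpand : (n • y - 1) ^ 2 = n ^ 2 • y ^ 2 + 1 - n • 2 • y := by
        rw [(Commute.one_right _).sub_sq, one_pow, mul_one, smul_pow, smul_comm n 2 y, two_mul,
          two_nsmul, sub_add_eq_add_sub]
      have hTn := hT _ hn.sq_nonneg
      rwa [hexpand, map_sub, map_add, map_nsmul, hTy, smul_zero, zero_add, map_nsmul, map_nsmul,
        sub_nonneg, ← Nat.cast_smul_eq_nsmul ℝ 2] at hTn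
    exact (smul_le_smul_iff_of_pos_left two_pos).mp htwo
  refine le_antisymm (hnonpos hx h) (neg_nonpos.mp ?_)
  rw [← map_neg]
  exact hnonpos hx.neg (by rwa [neg_sq])

end Positive

instance instPosSMulMonoSelfAdjoint {R E : Type*} [Zero R] [Preorder R] [Star R] [TrivialStar R]
    [AddGroup E] [StarAddMonoid E] [PartialOrder E] [SMul R E] [StarModule R E] [PosSMulMono R E] :
    PosSMulMono R (selfAdjoint E) :=
  .lift ((↑) : selfAdjoint E → E) Iff.rfl fun _ _ => rfl

section CStarAlgebra

variable {A : Type*} [CStarAlgebra A] [PartialOrder A] [StarOrderedRing A]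

theorem mul_mul_mem_Icc_zero_one {a b : A} (ha : a ∈ Icc 0 1) (hb : b ∈ Icc 0 1) :
    b * a * b ∈ Icc 0 1 := by
  refine ⟨conjugate_nonneg_of_nonneg ha.1 hb.1, ?_⟩
  calc b * a * b ≤ b * 1 * b := conjugate_le_conjugate_of_nonneg ha.2 hb.1
    _ = b ^ 2 := by rw [mul_one, sq]
    _ ≤ b ^ 0 := CStarAlgebra.pow_antitone hb.1 hb.2 zero_le_two
    _ = 1 := pow_zero b

theorem sq_mem_Icc_zero_one {a : A} (ha : a ∈ Icc 0 1) : a ^ 2 ∈ Icc 0 1 := by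
  simpa only [mul_one, sq] using mul_mul_mem_Icc_zero_one ⟨zero_le_one, le_rfl⟩ ha

theorem isOrderUnit_selfAdjoint_one : IsOrderUnit (1 : selfAdjoint A) := by
  refine ⟨zero_le_one (α := A), fun x => ?_⟩
  obtain ⟨n, hn⟩ := exists_nat_ge ‖(x : A)‖
  refine ⟨n, ?_⟩
  change (x : A) ≤ n • (1 : A)
  calc (x : A) ≤ algebraMap ℝ A ‖(x : A)‖ := x.2.le_algebraMap_norm_self
    _ ≤ algebraMap ℝ A n := algebraMap_mono A hn
    _ = n • (1 : A) := by rw [map_natCast, nsmul_one]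

theorem exists_effect_nsmul_eq {x : A} (hx : 0 ≤ x) :
    ∃ n : ℕ, ∃ a ∈ Icc (0 : A) 1, n • a = x := by
  obtain ⟨n, a, ha, hna⟩ := isOrderUnit_selfAdjoint_one.exists_mem_Icc_nsmul_eq ℝ
    (x := (⟨x, .of_nonneg hx⟩ : selfAdjoint A)) hx
  exact ⟨n, a, ha, congrArg Subtype.val hna⟩

theorem IsEffectAdditive.exists_addMonoidHom_eqOn_effects {W : Type*} [AddCommGroup W] {τ : A → W}
    (hτ : IsEffectAdditive 1 τ) : ∃ T : A →+ W, EqOn T τ (Icc 0 1) := by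
  have hτ' : IsEffectAdditive 1 fun x : selfAdjoint A => τ x :=
    fun a ha b hb hab => hτ a ha b hb hab
  obtain ⟨T, hT⟩ := hτ'.exists_addMonoidHom_eqOn_Icc ℝ isOrderUnit_selfAdjoint_one
  refine ⟨T.comp realPart.toAddMonoidHom, fun a ha => ?_⟩
  have hre : realPart a = ⟨a, .of_nonneg ha.1⟩ :=
    Subtype.ext (IsSelfAdjoint.of_nonneg ha.1).coe_realPart
  calc T (realPart a) = T ⟨a, .of_nonneg ha.1⟩ := by rw [hre]
    _ = τ a := hT ha

theorem IsSelfAdjointJordan.of_effects {T : A →+ A}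
    (hT : ∀ a ∈ Icc (0 : A) 1, T (a ^ 2) = T (T a ^ 2)) : IsSelfAdjointJordan T := by
  refine .of_nonneg fun x hx => ?_
  obtain ⟨n, a, ha, rfl⟩ := exists_effect_nsmul_eq hx
  rw [map_nsmul, smul_pow, smul_pow, map_nsmul, map_nsmul, hT a ha]

theorem map_nonneg_of_effects {B : Type*} [AddCommGroup B] [PartialOrder B] [IsOrderedAddMonoid B]
    {T : A →+ B} (hT : ∀ a ∈ Icc (0 : A) 1, 0 ≤ T a) {x : A} (hx : 0 ≤ x) : 0 ≤ T x := by
  obtain ⟨n, a, ha, rfl⟩ := exists_effect_nsmul_eq hx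
  rw [map_nsmul]
  exact nsmul_nonneg (hT a ha) n

end CStarAlgebra

/-- A unital additive map `τ` on the effect algebra `E(A)` of a unital C*-algebra
satisfying the Jordan condition `τ (a²) = τ ((τ a)²)` is: (i) idempotent (hence a state
operator); (ii) satisfies `τ a = 0 ↔ τ (a²) = 0`; and (iii) `τ a = 0` implies
`τ (b · a · b) = 0` for every effect `b`. -/
theorem jordan_stateOperator_properties
    (A : Type*) [CStarAlgebra A] [PartialOrder A] [StarOrderedRing A]
    (τ : A → A)
    (hmaps : ∀ a ∈ Set.Icc (0 : A) 1, τ a ∈ Set.Icc (0 : A) 1)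
    (hunital : τ 1 = 1)
    (hadd : ∀ a ∈ Set.Icc (0 : A) 1, ∀ b ∈ Set.Icc (0 : A) 1,
      a + b ∈ Set.Icc (0 : A) 1 → τ (a + b) = τ a + τ b)
    (hjordan : ∀ a ∈ Set.Icc (0 : A) 1, τ (a ^ 2) = τ ((τ a) ^ 2)) :
    (∀ a ∈ Set.Icc (0 : A) 1, τ (τ a) = τ a) ∧
    (∀ a ∈ Set.Icc (0 : A) 1, (τ a = 0 ↔ τ (a ^ 2) = 0)) ∧
    (∀ a ∈ Set.Icc (0 : A) 1, τ a = 0 → ∀ b ∈ Set.Icc (0 : A) 1, τ (b * a * b) = 0) := by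
  obtain ⟨T, hTτ⟩ := IsEffectAdditive.exists_addMonoidHom_eqOn_effects hadd
  have : IsAddTorsionFree A := .of_isTorsionFree ℝ A
  have hT : IsSelfAdjointJordan T := .of_effects fun a ha => by
    rw [hTτ (sq_mem_Icc_zero_one ha), hTτ ha, hTτ (sq_mem_Icc_zero_one (hmaps a ha)),
      hjordan a ha]
  have hT1 : T 1 = 1 := by rw [hTτ ⟨zero_le_one, le_rfl⟩, hunital]
  have hTpos (x : A) (hx : 0 ≤ x) : 0 ≤ T x :=
    map_nonneg_of_effects (fun a ha => hTτ ha ▸ (hmaps a ha).1) hx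
  refine ⟨fun a ha => ?_, fun a ha => ?_, fun a ha h b hb => ?_⟩
  · rw [← hTτ (hmaps a ha), ← hTτ ha]
    exact hT.map_map hT1 (.of_nonneg ha.1)
  · rw [← hTτ ha, ← hTτ (sq_mem_Icc_zero_one ha)]
    refine ⟨fun h => ?_, map_eq_zero_of_map_sq_eq_zero hTpos (.of_nonneg ha.1)⟩
    rw [hT a (.of_nonneg ha.1), h, zero_pow two_ne_zero, map_zero]
  · rw [← hTτ ha] at h
    rw [← hTτ (mul_mul_mem_Icc_zero_one ha hb)]
    exact hT.map_mul_mul_eq_zero (.of_nonneg ha.1) (.of_nonneg hb.1) h
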